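/- For every finite word w over the alphabet {a, b, c, d}, one has S(σ²(w)) = 2·S(w) and S'(σ²(w)) = 2·S'(w). -/

import Mathlib

/-- The alphabet `{a, b, c, d}`. -/
inductive Letter : Type
  | a | b | c | d
deriving DecidableEq

open Letter

/-- The substitution `σ : a ↦ ab, b ↦ ac, c ↦ db, d ↦ dc`. -/
def sub : Letter → List Letter
  | a => [a, b]
  | b => [a, c]
  | c => [d, b]
  | d => [d, c]

/-- The substitution `σ` extended to finite words by concatenation. -/
def subw (w : List Letter) : List Letter := (w.map sub).flatten

/-- The coding `τ : a, b ↦ 1, c, d ↦ −1`. -/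
def τ : Letter → ℤ
  | a => 1
  | b => 1
  | c => -1
  | d => -1

/-- The coding `τ' : a, c ↦ 1, b, d ↦ −1`. -/
def τ' : Letter → ℤ
  | a => 1
  | b => -1
  | c => 1
  | d => -1

/-- `S(u)`: the sum of `τ` over the letters of `u`. -/
def S (u : List Letter) : ℤ := (u.map τ).sum

/-- `S'(u)`: the sum of `τ'` over the letters of `u`. -/
def S' (u : List Letter) : ℤ := (u.map τ').sum

/-- For every finite word `w` over `{a, b, c, d}`,
`S(σ²(w)) = 2·S(w)` and `S'(σ²(w)) = 2·S'(w)`. -/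
theorem S_sub_sq (w : List Letter) :
    S (subw (subw w)) = 2 * S w ∧ S' (subw (subw w)) = 2 * S' w := by
  induction w with
  | nil => simp [S, S', subw]
  | cons x w ih =>
    obtain ⟨h1, h2⟩ := ih
    simp only [S, S', subw] at h1 h2 ⊢
    cases x <;> simp [sub, τ, τ'] at h1 h2 ⊢ <;> constructor <;> linarith
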